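/- arXiv:1405.3597 — 2 statements merged into one kernel-verified Lean document; each statement's English description precedes it below -/
import Mathlib

section
/- Let F be a barycentrically associative *-ary polynomial function on an infinite field R and assume that F_{n+1} is nonconstant for some integer n ≥ 2. Then there exists an idempotent binary polynomial function P : R² → R such that for all x_1,…,x_{n+1} ∈ R: (1) F_{n+1}(x_1,…,x_{n+1}) = P(F_n(x_1,…,x_n), x_{n+1}); (2) F_{n+1}(x_1,…,x_{n+1}) = P(F_n(x_1, (n−1)·F_n(x_2,…,x_{n+1})), F_n(x_2,…,x_{n+1})); and (3) P(F_n(F_n(x_2,…,x_{n+1}), x_2,…,x_n), x_{n+1}) = F_n(x_2,…,x_{n+1}). -/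
/-!
The diagonal `q(t) = F_{n+1}(t, …, t)` satisfies `q ∘ q = q`. Over an infinite integral domain this
forces the polynomial `q` to be constant or `X`; the former would make `F_{n+1} = q ∘ F_{n+1}`
constant, so `F_{n+1}` is idempotent. Then `P(a, b) = F_{n+1}(n·a, b)` is idempotent, and (1)-(3)
come from replacing either the first or the last `n` arguments by copies of their `F_n`-value.
-/

/-- Barycentric associativity of a `*`-ary function. -/
def BAssoc {X : Type*} (F : ∀ n : ℕ, (Fin n → X) → X) : Prop :=
  ∀ (a b k : ℕ), 1 ≤ k → ∀ (x : Fin a → X) (y : Fin k → X) (z : Fin b → X),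
    F (a + k + b) (Fin.append (Fin.append x y) z) =
      F (a + k + b) (Fin.append (Fin.append x (fun _ : Fin k => F k y)) z)

section Polynomial

open Polynomial

theorem eq_X_or_eq_C_of_comp_self_eq {R : Type*} [Ring R] [NoZeroDivisors R] {q : R[X]}
    (h : q.comp q = q) : q = X ∨ q = C (q.coeff 0) := by
  have hsub : (q - X).comp q = 0 := by rw [sub_comp, X_comp, h, sub_self]
  exact (comp_eq_zero_iff.mp hsub).imp sub_eq_zero.mp And.right

theorem eval_aeval_const_X {R σ : Type*} [CommSemiring R] (p : MvPolynomial σ R) (t : R) :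
    (MvPolynomial.aeval (fun _ : σ => (X : R[X])) p).eval t =
      MvPolynomial.eval (fun _ => t) p := by
  rw [← coe_aeval_eq_eval, MvPolynomial.comp_aeval_apply]
  simp only [aeval_X, MvPolynomial.aeval_eq_eval]

theorem eval_const_eq_self_of_range_idempotent {R σ : Type*} [CommRing R] [IsDomain R] [Infinite R]
    {p : MvPolynomial σ R}
    (hp : ∀ x, MvPolynomial.eval (fun _ => MvPolynomial.eval x p) p = MvPolynomial.eval x p)
    (hnc : ¬ ∃ c, ∀ x, MvPolynomial.eval x p = c) (t : R) :
    MvPolynomial.eval (fun _ => t) p = t := by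
  let q : R[X] := MvPolynomial.aeval (fun _ => X) p
  have hcomp : q.comp q = q := Polynomial.funext fun s => by
    simp only [q, eval_comp, eval_aeval_const_X, hp]
  rw [← eval_aeval_const_X]
  rcases eq_X_or_eq_C_of_comp_self_eq hcomp with hX | hC
  · exact (congrArg (eval t) hX).trans eval_X
  · refine absurd ⟨q.coeff 0, fun x => ?_⟩ hnc
    rw [← hp, ← eval_aeval_const_X]
    exact (congrArg (eval _) hC).trans eval_C

end Polynomial

section BAssoc

theorem init_cons {X : Type*} {n : ℕ} (a : X) (y : Fin (n + 1) → X) :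
    Fin.init (Fin.cons a y : Fin (n + 2) → X) = Fin.cons a (Fin.init y) := by
  ext i
  cases i using Fin.cases <;> rfl

variable {X : Type*} (F : ∀ n : ℕ, (Fin n → X) → X)

theorem apply_comp_cast {k n : ℕ} (h : k = n) (x : Fin n → X) : F k (x ∘ Fin.cast h) = F n x := by
  subst h
  rfl

/-- The binary operation `(a, b) ↦ F_{n+1}(n·a, b)`, which serves as the `P` of the theorem. -/
def lastMerge (n : ℕ) (a b : X) : X :=
  F (n + 1) (Fin.snoc (fun _ => a) b)

theorem lastMerge_self (n : ℕ) (a : X) : lastMerge F n a a = F (n + 1) fun _ => a :=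
  congrArg (F (n + 1)) (Fin.snoc_init_self fun _ => a)

variable {F}

namespace BAssoc

theorem apply_append_left (hB : BAssoc F) {k b : ℕ} (hk : 1 ≤ k) (x : Fin k → X) (z : Fin b → X) :
    F (k + b) (Fin.append x z) = F (k + b) (Fin.append (fun _ => F k x) z) := by
  have happend (w : Fin k → X) :
      F (0 + k + b) (Fin.append (Fin.append Fin.elim0 w) z) = F (k + b) (Fin.append w z) := by
    rw [Fin.append_assoc, apply_comp_cast F, Fin.elim0_append, apply_comp_cast F]
  simpa only [happend] using hB 0 b k hk Fin.elim0 x z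

theorem apply_append_right (hB : BAssoc F) {a k : ℕ} (hk : 1 ≤ k) (x : Fin a → X) (y : Fin k → X) :
    F (a + k) (Fin.append x y) = F (a + k) (Fin.append x fun _ => F k y) := by
  simpa only [Fin.append_elim0, apply_comp_cast] using hB a 0 k hk x y Fin.elim0

theorem apply_const_apply (hB : BAssoc F) {n : ℕ} (hn : 1 ≤ n) (x : Fin n → X) :
    F n (fun _ => F n x) = F n x := by
  simpa only [Fin.append_elim0, apply_comp_cast] using (hB.apply_append_left hn x Fin.elim0).symm

theorem apply_eq_lastMerge_init (hB : BAssoc F) {n : ℕ} (hn : 1 ≤ n) (x : Fin (n + 1) → X) :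
    F (n + 1) x = lastMerge F n (F n (Fin.init x)) (x (Fin.last n)) := by
  have h := hB.apply_append_left hn (Fin.init x) fun _ : Fin 1 => x (Fin.last n)
  simpa only [Fin.append_right_eq_snoc, Fin.snoc_init_self, lastMerge] using h

theorem apply_cons (hB : BAssoc F) {n : ℕ} (hn : 1 ≤ n) (a : X) (y : Fin n → X) :
    F (n + 1) (Fin.cons a y) = F (n + 1) (Fin.cons a fun _ => F n y) := by
  simpa only [Fin.append_left_eq_cons, apply_comp_cast] using
    hB.apply_append_right hn (fun _ : Fin 1 => a) y

theorem apply_cons_eq_lastMerge (hB : BAssoc F) {n : ℕ} (a : X) (y : Fin (n + 1) → X) :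
    F (n + 2) (Fin.cons a y) =
      lastMerge F (n + 1) (F (n + 1) (Fin.cons a fun _ => F (n + 1) y)) (F (n + 1) y) := by
  rw [hB.apply_cons n.succ_pos, hB.apply_eq_lastMerge_init n.succ_pos, init_cons]
  rfl

theorem lastMerge_apply_cons_init (hB : BAssoc F) {n : ℕ} (y : Fin (n + 1) → X) :
    lastMerge F (n + 1) (F (n + 1) (Fin.cons (F (n + 1) y) (Fin.init y))) (y (Fin.last n)) =
      F (n + 2) fun _ => F (n + 1) y := by
  set u := F (n + 1) y
  calc lastMerge F (n + 1) (F (n + 1) (Fin.cons u (Fin.init y))) (y (Fin.last n))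
      = F (n + 2) (Fin.cons u y) := by
        rw [hB.apply_eq_lastMerge_init n.succ_pos, init_cons]
        rfl
    _ = F (n + 2) (Fin.cons u fun _ => u) := hB.apply_cons n.succ_pos u y
    _ = F (n + 2) fun _ => u := congrArg (F (n + 2)) (Fin.cons_self_tail fun _ => u)

theorem apply_const_eq_self {R : Type*} [CommRing R] [IsDomain R] [Infinite R]
    {F : ∀ n : ℕ, (Fin n → R) → R} (hB : BAssoc F) {n : ℕ} (hn : 1 ≤ n)
    {p : MvPolynomial (Fin n) R} (hp : ∀ x, F n x = MvPolynomial.eval x p)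
    (hnc : ¬ ∃ c, ∀ x, F n x = c) (t : R) : F n (fun _ => t) = t := by
  simp only [hp] at hnc ⊢
  refine eval_const_eq_self_of_range_idempotent (fun x => ?_) hnc t
  simpa only [hp] using hB.apply_const_apply hn x

end BAssoc

end BAssoc

theorem exists_lastMerge_eq_eval {R : Type*} [CommSemiring R]
    {F : ∀ n : ℕ, (Fin n → R) → R} {n : ℕ} {p : MvPolynomial (Fin (n + 1)) R}
    (hp : ∀ x, F (n + 1) x = MvPolynomial.eval x p) :
    ∃ r : MvPolynomial (Fin 2) R, ∀ a b, lastMerge F n a b = MvPolynomial.eval ![a, b] r := by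
  refine ⟨MvPolynomial.rename (Fin.snoc (fun _ => 0) 1) p, fun a b => ?_⟩
  rw [lastMerge, hp, MvPolynomial.eval_rename, Fin.comp_snoc]
  rfl

theorem exists_idempotent_P_general
    {R : Type*} [CommRing R] [IsDomain R] [Infinite R]
    (F : ∀ n : ℕ, (Fin n → R) → R) (n : ℕ)
    (hpoly : ∃ p : MvPolynomial (Fin (n + 2)) R, ∀ x, F (n + 2) x = MvPolynomial.eval x p)
    (hB : BAssoc F)
    (hnc : ¬ ∃ c : R, ∀ x : Fin (n + 2) → R, F (n + 2) x = c) :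
    ∃ P : R → R → R,
      (∃ p : MvPolynomial (Fin 2) R, ∀ a b : R, P a b = MvPolynomial.eval ![a, b] p) ∧
      (∀ a : R, P a a = a) ∧
      (∀ x : Fin (n + 2) → R,
        F (n + 2) x = P (F (n + 1) (x ∘ Fin.castSucc)) (x (Fin.last (n + 1)))) ∧
      (∀ x : Fin (n + 2) → R,
        F (n + 2) x =
          P (F (n + 1) (Fin.cons (x 0) (fun _ : Fin n => F (n + 1) (x ∘ Fin.succ))))
            (F (n + 1) (x ∘ Fin.succ))) ∧
      (∀ x : Fin (n + 2) → R,
        P (F (n + 1)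
            (Fin.cons (F (n + 1) (x ∘ Fin.succ)) (fun i : Fin n => x i.succ.castSucc)))
          (x (Fin.last (n + 1))) = F (n + 1) (x ∘ Fin.succ)) := by
  obtain ⟨p, hp⟩ := hpoly
  have hidem := hB.apply_const_eq_self (n + 1).succ_pos hp hnc
  refine ⟨lastMerge F (n + 1), exists_lastMerge_eq_eval hp,
    fun a => (lastMerge_self F _ a).trans (hidem a),
    hB.apply_eq_lastMerge_init n.succ_pos, fun x => ?_,
    fun x => (hB.lastMerge_apply_cons_init (x ∘ Fin.succ)).trans (hidem _)⟩
  rw [← hB.apply_cons_eq_lastMerge]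
  exact congrArg (F (n + 2)) (Fin.cons_self_tail x).symm

/-- Lemma: let `F` be a B-associative `*`-ary polynomial function on an infinite field
`R` and suppose `F_{n+1}` is nonconstant for some `n ≥ 2` (here `n = m + 2`). Then there
is an idempotent binary polynomial function `P : R² → R` such that, for all
`x_1, …, x_{n+1} ∈ R`:
(1) `F_{n+1}(x_1,…,x_{n+1}) = P(F_n(x_1,…,x_n), x_{n+1})`;
(2) `F_{n+1}(x_1,…,x_{n+1}) = P(F_n(x_1,(n-1)·F_n(x_2,…,x_{n+1})), F_n(x_2,…,x_{n+1}))`;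
(3) `P(F_n(F_n(x_2,…,x_{n+1}), x_2,…,x_n), x_{n+1}) = F_n(x_2,…,x_{n+1})`. -/
theorem exists_idempotent_P
    {R : Type*} [Field R] [Infinite R]
    (F : ∀ n : ℕ, (Fin n → R) → R)
    (hpoly : ∀ n : ℕ, 1 ≤ n →
      ∃ p : MvPolynomial (Fin n) R, ∀ x : Fin n → R, F n x = MvPolynomial.eval x p)
    (hB : BAssoc F) (m : ℕ)
    (hnc : ¬ ∃ c : R, ∀ x : Fin (m + 3) → R, F (m + 3) x = c) :
    ∃ P : R → R → R,
      (∃ p : MvPolynomial (Fin 2) R, ∀ a b : R, P a b = MvPolynomial.eval ![a, b] p) ∧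
      (∀ a : R, P a a = a) ∧
      (∀ x : Fin (m + 3) → R,
        F (m + 3) x = P (F (m + 2) (x ∘ Fin.castSucc)) (x (Fin.last (m + 2)))) ∧
      (∀ x : Fin (m + 3) → R,
        F (m + 3) x =
          P (F (m + 2)
              (Fin.cons (x 0) (fun _ : Fin (m + 1) => F (m + 2) (x ∘ Fin.succ))))
            (F (m + 2) (x ∘ Fin.succ))) ∧
      (∀ x : Fin (m + 3) → R,
        P (F (m + 2)
            (Fin.cons (F (m + 2) (x ∘ Fin.succ))
              (fun i : Fin (m + 1) => x i.succ.castSucc)))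
          (x (Fin.last (m + 2))) = F (m + 2) (x ∘ Fin.succ)) :=
  exists_idempotent_P_general F (m + 1) (hpoly (m + 3) (m + 2).succ_pos) hB hnc
end

section
/- Let R be an infinite commutative integral domain and let z ∈ R. The *-ary function M^z on R, whose n-ary part equals the weighted arithmetic mean M_n^z for every n < n(z) and equals the constant 0 function for every n ≥ n(z), is barycentrically associative. -/
/-- `Δ_n^z = Σ_{i=1}^n z^{n-i} (1-z)^{i-1}` (here reindexed from `0` to `n-1`). -/
def Delta {R : Type*} [CommRing R] (n : ℕ) (z : R) : R :=
  ∑ i ∈ Finset.range n, z ^ (n - 1 - i) * (1 - z) ^ i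

/-- The weighted arithmetic mean `M_n^z`. -/
noncomputable def Mz {R : Type*} [CommRing R] (n : ℕ) (z : R) (x : Fin n → R) : R :=
  Ring.inverse (Delta n z) * ∑ i : Fin n, z ^ (n - 1 - (i : ℕ)) * (1 - z) ^ (i : ℕ) * x i

/-- `n(z) = inf { n ≥ 1 : Δ_n^z is not invertible }` in `ℕ∞`. -/
noncomputable def nz {R : Type*} [CommRing R] (z : R) : ℕ∞ :=
  sInf {c : ℕ∞ | ∃ m : ℕ, c = (m : ℕ∞) ∧ 1 ≤ m ∧ ¬ IsUnit (Delta m z)}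

/-!
The weighted sum of a concatenation is a combination of the weighted sums of its blocks, so it
depends on a block only through the weighted sum of that block. When `Δ_k^z` is invertible,
replacing a block of length `k` by copies of its mean does not change its weighted sum. A block is
no longer than the whole tuple, so whenever the whole tuple has length below `n(z)` this applies
to each of its nonempty blocks; from `n(z)` on the function is constant.
-/

/-- The unnormalised weighted mean with geometric weights `p ^ (n - 1), p ^ (n - 2) * q, …,
q ^ (n - 1)`: the numerator of `Mz` when `p = z` and `q = 1 - z`. -/
def geomWeightedSum {R : Type*} [CommSemiring R] {n : ℕ} (p q : R) (x : Fin n → R) : R :=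
  ∑ i : Fin n, p ^ (n - 1 - (i : ℕ)) * q ^ (i : ℕ) * x i

theorem geomWeightedSum_append {R : Type*} [CommSemiring R] {m n : ℕ} (p q : R)
    (x : Fin m → R) (y : Fin n → R) :
    geomWeightedSum p q (Fin.append x y) =
      p ^ n * geomWeightedSum p q x + q ^ m * geomWeightedSum p q y := by
  simp only [geomWeightedSum, Fin.sum_univ_add, Fin.append_left, Fin.append_right,
    Fin.val_castAdd, Fin.val_natAdd, Finset.mul_sum]
  congr 1 <;> refine Finset.sum_congr rfl fun i _ => ?_
  · have exponent_eq : m + n - 1 - (i : ℕ) = n + (m - 1 - i) := by omega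
    rw [exponent_eq, pow_add]
    ring
  · have exponent_eq : m + n - 1 - (m + (i : ℕ)) = n - 1 - i := by omega
    rw [exponent_eq, pow_add]
    ring

theorem geomWeightedSum_const {R : Type*} [CommSemiring R] (p q : R) (n : ℕ) (c : R) :
    geomWeightedSum p q (fun _ : Fin n => c) =
      (∑ i ∈ Finset.range n, p ^ (n - 1 - i) * q ^ i) * c := by
  rw [geomWeightedSum, ← Finset.sum_mul,
    Fin.sum_univ_eq_sum_range (fun i => p ^ (n - 1 - i) * q ^ i) n]

section CommRing

variable {R : Type*} [CommRing R] {z : R}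

theorem Mz_eq_inverse_mul_geomWeightedSum (n : ℕ) (z : R) (x : Fin n → R) :
    Mz n z x = Ring.inverse (Delta n z) * geomWeightedSum z (1 - z) x :=
  rfl

theorem geomWeightedSum_const_Mz {n : ℕ} (hΔ : IsUnit (Delta n z)) (x : Fin n → R) :
    geomWeightedSum z (1 - z) (fun _ : Fin n => Mz n z x) = geomWeightedSum z (1 - z) x := by
  rw [geomWeightedSum_const, ← Delta, Mz_eq_inverse_mul_geomWeightedSum,
    Ring.mul_inverse_cancel_left _ _ hΔ]

theorem Mz_append_const_Mz {a k b : ℕ} (hΔ : IsUnit (Delta k z))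
    (x : Fin a → R) (y : Fin k → R) (w : Fin b → R) :
    Mz (a + k + b) z (Fin.append (Fin.append x fun _ : Fin k => Mz k z y) w) =
      Mz (a + k + b) z (Fin.append (Fin.append x y) w) := by
  simp only [Mz_eq_inverse_mul_geomWeightedSum (a + k + b), geomWeightedSum_append,
    geomWeightedSum_const_Mz hΔ]

theorem isUnit_Delta_of_lt_nz {n : ℕ} (hn : 1 ≤ n) (h : (n : ℕ∞) < nz z) :
    IsUnit (Delta n z) := by
  by_contra hΔ
  exact h.not_ge (sInf_le ⟨n, rfl, hn, hΔ⟩)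

theorem Mz_bassoc_general (F : ∀ n : ℕ, (Fin n → R) → R) {N : ℕ∞} (hN : N ≤ nz z)
    (hlt : ∀ n : ℕ, 1 ≤ n → (n : ℕ∞) < N → F n = Mz n z)
    (hge : ∀ n : ℕ, 1 ≤ n → N ≤ (n : ℕ∞) → ∀ x x' : Fin n → R, F n x = F n x') :
    BAssoc F := by
  intro a b k hk x y w
  have hk_le : k ≤ a + k + b := by omega
  have hn : 1 ≤ a + k + b := hk.trans hk_le
  rcases lt_or_ge ((a + k + b : ℕ) : ℕ∞) N with hn_lt | hn_ge
  · have hk_lt : (k : ℕ∞) < N := (Nat.cast_le.mpr hk_le).trans_lt hn_lt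
    have hΔ : IsUnit (Delta k z) := isUnit_Delta_of_lt_nz hk (hk_lt.trans_le hN)
    rw [hlt _ hn hn_lt, hlt k hk hk_lt, Mz_append_const_Mz hΔ]
  · exact hge _ hn hn_ge _ _

end CommRing

/-- The `*`-ary function `M^z` — whose `n`-ary part is the weighted arithmetic mean
`M_n^z` for `n < n(z)` and the constant `0` function for `n ≥ n(z)` — is
barycentrically associative. -/
theorem Mz_bassoc
    {R : Type*} [CommRing R] [IsDomain R] [Infinite R] (z : R)
    (F : ∀ n : ℕ, (Fin n → R) → R)
    (hlt : ∀ n : ℕ, 1 ≤ n → (n : ℕ∞) < nz z → F n = Mz n z)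
    (hge : ∀ n : ℕ, 1 ≤ n → nz z ≤ (n : ℕ∞) → ∀ x : Fin n → R, F n x = 0) :
    BAssoc F :=
  Mz_bassoc_general F le_rfl hlt fun n hn h x x' => (hge n hn h x).trans (hge n hn h x').symm
end
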